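/- There exists a constant ϑ ∈ (0,1) such that the following holds. Let μ be a probability measure on 𝕊 whose density is Lipschitz on J_z with constant L > 0 for some z ∈ 𝕊; let k ≥ 2; let f⁽¹⁾, …, f⁽ᵏ⁾ : 𝕊 → ℝ be Lipschitz continuous; and let 0 ≤ t₁ < ⋯ < t_k ≤ 1. Then for all m ∈ {1, …, k−1} and all n ≥ 0, |μ(f⁽¹⁾_{n,⌊nt₁⌋} ⋯ f⁽ᵏ⁾_{n,⌊nt_k⌋}) − μ(f⁽¹⁾_{n,⌊nt₁⌋} ⋯ f⁽ᵐ⁾_{n,⌊nt_m⌋}) · μ(f⁽ᵐ⁺¹⁾_{n,⌊nt_{m+1}⌋} ⋯ f⁽ᵏ⁾_{n,⌊nt_k⌋})| ≤ C ϑ^{n(t_{m+1} − t_m)}, where C > 0 depends only on k, the Lipschitz norms of the f⁽ʲ⁾, and L. -/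

import Mathlib

open MeasureTheory Filter Topology Set UniformConvergence

noncomputable section

instance : Fact ((0:ℝ) < 1) := ⟨zero_lt_one⟩

/-- The circle `𝕊 = ℝ/ℤ`. -/
abbrev Circle1 : Type := AddCircle (1 : ℝ)

/-- A `C²` expanding circle map with expansion `≥ lam` and `‖T''‖_∞ ≤ Astar`,
encoded by a lift `F : ℝ → ℝ` satisfying `F (x+1) = F x + deg`. -/
structure CM (lam Astar : ℝ) where
  F : ℝ → ℝ
  deg : ℤ
  lift_add_one : ∀ x : ℝ, F (x + 1) = F x + deg
  contDiff : ContDiff ℝ 2 F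
  expanding : ∀ x : ℝ, lam ≤ deriv F x
  second_bound : ∀ x : ℝ, |deriv (deriv F) x| ≤ Astar

namespace CM

variable {lam Astar : ℝ}

/-- The induced map on the circle. -/
def toMap (T : CM lam Astar) : Circle1 → Circle1 :=
  fun x => (↑(T.F ((AddCircle.equivIco 1 0 x : ℝ))) : Circle1)

/-- The derivative of `T`, as a function on the circle. -/
def dmap (T : CM lam Astar) : Circle1 → ℝ :=
  fun x => deriv T.F ((AddCircle.equivIco 1 0 x : ℝ))

end CM

/-- The `C¹` distance on the space of maps. -/
def dC1 {lam Astar : ℝ} (T₁ T₂ : CM lam Astar) : ℝ :=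
  (⨆ x : Circle1, dist (T₁.toMap x) (T₂.toMap x)) + (⨆ x : Circle1, |T₁.dmap x - T₂.dmap x|)

/-- The transfer operator `ℒ_T h (x) = ∑_{T y = x} h y / T' y`. -/
def transfer {lam Astar : ℝ} (T : CM lam Astar) (h : Circle1 → ℝ) : Circle1 → ℝ :=
  fun x => ∑' y : {y : Circle1 // T.toMap y = x}, h y / T.dmap y

/-- Iterated transfer operators `ℒ_k ⋯ ℒ_1` of the sequence `T_1, T_2, …` (`Ts i = T_i`). -/
def transferIter {lam Astar : ℝ} (Ts : ℕ → CM lam Astar) : ℕ → (Circle1 → ℝ) → (Circle1 → ℝ)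
  | 0, h => h
  | (k+1), h => transfer (Ts (k+1)) (transferIter Ts k h)

/-- Composition `T_k ∘ ⋯ ∘ T_1` as circle maps. -/
def mapIter {lam Astar : ℝ} (Ts : ℕ → CM lam Astar) : ℕ → Circle1 → Circle1
  | 0 => id
  | (k+1) => (Ts (k+1)).toMap ∘ mapIter Ts k

/-- Composition of the lifts `F_k ∘ ⋯ ∘ F_1`. -/
def liftIter {lam Astar : ℝ} (Ts : ℕ → CM lam Astar) : ℕ → ℝ → ℝ
  | 0 => id
  | (k+1) => (Ts (k+1)).F ∘ liftIter Ts k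

/-- A real representative of `z`. -/
def zrep (z : Circle1) : ℝ := (AddCircle.equivIco 1 0 z : ℝ)

/-- The coordinate on the cut circle `J_z = 𝕊 ∖ {z}`. -/
def arcCoord (z x : Circle1) : ℝ := ((AddCircle.equivIoc 1 (zrep z) x : ℝ))

/-- `|x − y|_z`: the length of the subarc of `J_z` connecting `x` and `y`. -/
def arcDist (z x y : Circle1) : ℝ := |arcCoord z x - arcCoord z y|

/-- `g` is Lipschitz on `J_z = 𝕊 ∖ {z}` with constant `L`. -/
def LipOnArc (z : Circle1) (L : ℝ) (g : Circle1 → ℝ) : Prop :=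
  ∀ x y : Circle1, x ≠ z → y ≠ z → |g x - g y| ≤ L * arcDist z x y

/-- A probability density w.r.t. the Haar–Lebesgue measure `𝔪` on the circle. -/
def IsProbDensity (ψ : Circle1 → ℝ) : Prop :=
  Integrable ψ volume ∧ (∫ x : Circle1, ψ x) = 1 ∧ ∀ x, 0 ≤ ψ x

/-- The class `𝒟_L`: positive probability densities whose logarithm is Lipschitz
with constant `L` on `J_z` for some `z`. -/
def memD (L : ℝ) (ψ : Circle1 → ℝ) : Prop :=
  IsProbDensity ψ ∧ (∀ x, 0 < ψ x) ∧ ∃ z : Circle1, LipOnArc z L (fun x => Real.log (ψ x))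

/-- The `L¹(𝔪)` norm. -/
def l1norm (h : Circle1 → ℝ) : ℝ := ∫ x : Circle1, |h x|

/-- The supremum norm. -/
def supNorm (h : Circle1 → ℝ) : ℝ := ⨆ x : Circle1, |h x|

/-- The Lipschitz constant of `h` (w.r.t. the metric of the circle). -/
def lipConst (h : Circle1 → ℝ) : ℝ :=
  sInf {L : ℝ | 0 ≤ L ∧ ∀ x y : Circle1, |h x - h y| ≤ L * dist x y}

/-- The Lipschitz norm `‖h‖_Lip = Lip(h) + ‖h‖_∞`. -/
def lipNorm (h : Circle1 → ℝ) : ℝ := lipConst h + supNorm h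

/-- `ρ` is the density of the SRB measure of `T`: the density of a `T`-invariant
probability measure equivalent to `𝔪`. -/
def IsSRBDensity {lam Astar : ℝ} (T : CM lam Astar) (ρ : Circle1 → ℝ) : Prop :=
  IsProbDensity ρ ∧ (∀ᵐ x : Circle1, 0 < ρ x) ∧
    Measure.map T.toMap (volume.withDensity (fun x => ENNReal.ofReal (ρ x))) =
      volume.withDensity (fun x => ENNReal.ofReal (ρ x))

section QDS

variable {lam Astar : ℝ}

/-- `x_{n,k} = T_{n,k} ∘ ⋯ ∘ T_{n,1}` for a triangular array. -/
def arrIter (Tarr : ℕ → ℕ → CM lam Astar) (n : ℕ) : ℕ → Circle1 → Circle1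
  | 0 => id
  | (k+1) => (Tarr n (k+1)).toMap ∘ arrIter Tarr n k

/-- `ℒ_{n,k} ⋯ ℒ_{n,1}` for a triangular array. -/
def arrTransfer (Tarr : ℕ → ℕ → CM lam Astar) (n : ℕ) : ℕ → (Circle1 → ℝ) → (Circle1 → ℝ)
  | 0, h => h
  | (k+1), h => transfer (Tarr n (k+1)) (arrTransfer Tarr n k h)

/-- `f_{n,k} = f ∘ T_{n,k} ∘ ⋯ ∘ T_{n,1}` evaluated at `x`. -/
def fnk (Tarr : ℕ → ℕ → CM lam Astar) (f : Circle1 → ℝ) (n k : ℕ) (x : Circle1) : ℝ :=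
  f (arrIter Tarr n k x)

/-- `ζₙ(x,t) = n⁻¹ (∑_{k<⌊nt⌋} f_{n,k}(x) + {nt}·f_{n,⌊nt⌋}(x))`. -/
def zetaP (Tarr : ℕ → ℕ → CM lam Astar) (f : Circle1 → ℝ) (n : ℕ) (x : Circle1) (t : ℝ) : ℝ :=
  (n : ℝ)⁻¹ * ((∑ k ∈ Finset.range ⌊(n : ℝ) * t⌋₊, fnk Tarr f n k x) +
    Int.fract ((n : ℝ) * t) * fnk Tarr f n ⌊(n : ℝ) * t⌋₊ x)

/-- `ξₙ(x,t) = √n ζₙ(x,t) − √n μ(ζₙ(·,t))` for a measure `μ`. -/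
def xiP (Tarr : ℕ → ℕ → CM lam Astar) (f : Circle1 → ℝ) (μ : Measure Circle1) (n : ℕ)
    (x : Circle1) (t : ℝ) : ℝ :=
  Real.sqrt n * zetaP Tarr f n x t - Real.sqrt n * ∫ y, zetaP Tarr f n y t ∂μ

/-- The Hölder continuity (exponent `η`) of the curve `γ` on `[0,1]`, w.r.t. `d_{C¹}`. -/
def HolderCurve (η : ℝ) (γ : ℝ → CM lam Astar) : Prop :=
  ∃ H : ℝ, ∀ s ∈ Icc (0:ℝ) 1, ∀ t ∈ Icc (0:ℝ) 1, dC1 (γ s) (γ t) ≤ H * |s - t| ^ η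

/-- The convergence-rate condition `sup_n n^η sup_t d_{C¹}(T_{n,⌊nt⌋}, γ_t) < ∞`. -/
def ArrayApprox (η : ℝ) (γ : ℝ → CM lam Astar) (Tarr : ℕ → ℕ → CM lam Astar) : Prop :=
  ∃ M : ℝ, ∀ n : ℕ, 1 ≤ n → ∀ t ∈ Icc (0:ℝ) 1,
    (n : ℝ) ^ η * dC1 (Tarr n ⌊(n : ℝ) * t⌋₊) (γ t) ≤ M

end QDS

/-- The path space: functions `[0,1] → ℝ` with the topology of uniform convergence;
continuous paths (with the supremum metric) embed isometrically. -/
abbrev PathSpace : Type := (Icc (0:ℝ) 1) →ᵤ ℝ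

instance : MeasurableSpace PathSpace := borel PathSpace

/-- A function `[0,1] → ℝ` (given as a function on `ℝ`) as a point of the path space. -/
def pathOf (g : ℝ → ℝ) : PathSpace := UniformFun.ofFun (fun t => g t)

/-- Evaluation of a path at time `t` (clamped to `[0,1]`). -/
def evalPath (t : ℝ) (ω : PathSpace) : ℝ := UniformFun.toFun ω (projIcc 0 1 zero_le_one t)


section Extra

variable {lam Astar : ℝ}

/-- `μ(ζₙ(·,t))` for the measure with density `ρ` w.r.t. `𝔪`. -/
def zetaMean (Tarr : ℕ → ℕ → CM lam Astar) (f : Circle1 → ℝ) (ρ : Circle1 → ℝ)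
    (n : ℕ) (t : ℝ) : ℝ :=
  ∫ y : Circle1, zetaP Tarr f n y t * ρ y

/-- `𝔪(ζₙ(·,t))`, the mean w.r.t. the Lebesgue measure. -/
def zetaMeanM (Tarr : ℕ → ℕ → CM lam Astar) (f : Circle1 → ℝ) (n : ℕ) (t : ℝ) : ℝ :=
  ∫ y : Circle1, zetaP Tarr f n y t

/-- `ξₙ(x,t) = √n ζₙ(x,t) − √n μ(ζₙ(·,t))`, where `μ` has density `ρ`. -/
def xiD (Tarr : ℕ → ℕ → CM lam Astar) (f : Circle1 → ℝ) (ρ : Circle1 → ℝ)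
    (n : ℕ) (x : Circle1) (t : ℝ) : ℝ :=
  Real.sqrt n * zetaP Tarr f n x t - Real.sqrt n * zetaMean Tarr f ρ n t

end Extra

/-- The σ-algebra `𝔉_t` on the path space, generated by the evaluations at times `s ∈ [0,t]`. -/
def pathFiltration (t : ℝ) : MeasurableSpace PathSpace :=
  ⨆ (s : ℝ) (_ : 0 ≤ s ∧ s ≤ t), MeasurableSpace.comap (evalPath s) (borel ℝ)

/-- The process `M_t(ω) = A(ω(t)) − A(ω(0)) − ½∫₀ᵗ σ̂ₛ²·A''(ω(s)) ds`. -/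
def MGproc (σ2 : ℝ → ℝ) (A : ℝ → ℝ) (t : ℝ) (ω : PathSpace) : ℝ :=
  A (evalPath t ω) - A (evalPath 0 ω) -
    (1/2) * ∫ s in (0:ℝ)..t, σ2 s * deriv (deriv A) (evalPath s ω)

/-- `P` solves the martingale problem on `C⁰([0,1],ℝ)` for the generator `½σ̂ₜ² d²/dx²`,
started at `0`:  `P` is a probability measure, concentrated on continuous paths starting at `0`,
and for every `A ∈ C_c^∞(ℝ)` the process `MGproc σ2 A` is a `P`-martingale w.r.t. the
natural filtration `𝔉_t`.  -/
def SolvesMartingaleProblem (σ2 : ℝ → ℝ) (P : Measure PathSpace) : Prop :=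
  IsProbabilityMeasure P ∧
  P {ω : PathSpace | evalPath 0 ω = 0} = 1 ∧
  P {ω : PathSpace | Continuous (UniformFun.toFun ω)} = 1 ∧
  ∀ A : ℝ → ℝ, ContDiff ℝ (⊤ : ℕ∞) A → HasCompactSupport A →
    (∀ t ∈ Icc (0:ℝ) 1, Integrable (MGproc σ2 A t) P) ∧
    (∀ t ∈ Icc (0:ℝ) 1, @Measurable PathSpace ℝ (pathFiltration t) _ (MGproc σ2 A t)) ∧
    (∀ s ∈ Icc (0:ℝ) 1, ∀ t ∈ Icc (0:ℝ) 1, s ≤ t →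
      P[MGproc σ2 A t | pathFiltration s] =ᵐ[P] MGproc σ2 A s)

end

/-!
A density with Lipschitz observables multiplied into it is a difference of two positive densities
whose logarithms are Lipschitz on an arc `[z, z + 1]`. The transfer operator of an expanding map
`T`, written with the lift as a sum over inverse branches, sends such densities on `[z, z + 1]` to
densities on `[F z, F z + 1]` with a smaller logarithmic Lipschitz constant. A small constant can
therefore be subtracted from the image without leaving the cone, and doing this to two densities of
equal mass contracts their difference by a fixed factor at each step.

Up to time `τ m`, each observable multiplied in raises the constant of the cone a little and the
mass by a bounded factor. During the gap between `τ m` and `τ (m + 1)` the result is exponentially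
close, up to its mass, to the image of the original density, since both forget everything except
their mass.
-/

lemma continuous_comp_coe {g : Circle1 → ℝ} (hg : Continuous g) :
    Continuous fun x : ℝ => g (x : Circle1) :=
  hg.comp (AddCircle.continuous_mk' 1)

lemma circle_coe_add_intCast (x : ℝ) (k : ℤ) : ((x + k : ℝ) : Circle1) = x := by
  have hk : ((k : ℝ) : Circle1) = 0 := (AddCircle.coe_eq_zero_iff 1).2 ⟨k, by simp⟩
  rw [AddCircle.coe_add, hk, add_zero]

lemma circle_dist_coe_le (x y : ℝ) : dist (x : Circle1) (y : Circle1) ≤ |x - y| := by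
  rw [dist_eq_norm, ← AddCircle.coe_sub]
  exact QuotientAddGroup.norm_mk_le_norm

lemma abs_sub_le_one_of_mem_Icc {z x y : ℝ} (hx : x ∈ Icc z (z + 1)) (hy : y ∈ Icc z (z + 1)) :
    |x - y| ≤ 1 := by
  rw [abs_le]
  constructor <;> linarith [hx.1, hx.2, hy.1, hy.2]

lemma integral_add_natCast_eq_integral_sum {q : ℝ → ℝ} (hq : Continuous q) (b : ℝ) (N : ℕ) :
    ∫ u in b..b + N, q u = ∫ y in b..b + 1, ∑ i ∈ Finset.range N, q (y + i) := by
  have hadj := intervalIntegral.sum_integral_adjacent_intervals (μ := volume) (f := q)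
    (a := fun i : ℕ => b + i) (n := N) fun _ _ => hq.intervalIntegrable _ _
  rw [intervalIntegral.integral_finsetSum (f := fun (i : ℕ) y => q (y + i)) fun i _ =>
    (hq.comp (continuous_add_const (i : ℝ))).intervalIntegrable _ _]
  rw [Nat.cast_zero, add_zero] at hadj
  rw [← hadj]
  refine Finset.sum_congr rfl fun i _ => ?_
  rw [intervalIntegral.integral_comp_add_right, Nat.cast_add_one, add_right_comm, add_assoc]

namespace CM

variable {lam Astar : ℝ}

lemma astar_nonneg (T : CM lam Astar) : 0 ≤ Astar :=
  (abs_nonneg _).trans (T.second_bound 0)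

variable (T : CM lam Astar)

lemma differentiable_lift : Differentiable ℝ T.F :=
  T.contDiff.differentiable (by norm_num)

lemma mul_sub_le_lift_sub {x y : ℝ} (hxy : x ≤ y) : lam * (y - x) ≤ T.F y - T.F x :=
  mul_sub_le_image_sub_of_le_deriv T.differentiable_lift T.expanding hxy

lemma abs_deriv_lift_sub_le (x y : ℝ) : |deriv T.F x - deriv T.F y| ≤ Astar * |x - y| :=
  convex_univ.norm_image_sub_le_of_norm_deriv_le
    (fun x _ => T.contDiff.differentiable_deriv_two x) (fun x _ => T.second_bound x)
    (mem_univ y) (mem_univ x)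

lemma lift_add_intCast (x : ℝ) (k : ℤ) : T.F (x + k) = T.F x + k * T.deg := by
  have := AddConstMapClass.map_add_int' (⟨T.F, T.lift_add_one⟩ : AddConstMap ℝ ℝ 1 (T.deg : ℝ)) x k
  rwa [zsmul_eq_mul] at this

lemma toMap_coe (x : ℝ) : T.toMap x = T.F x := by
  have hrep : (AddCircle.equivIco 1 0 (x : Circle1) : ℝ) = Int.fract x := by
    simpa only [div_one, mul_one] using AddCircle.coe_equivIco_mk_apply (p := (1 : ℝ)) x
  have hlift : T.F x = T.F (Int.fract x) + (⌊x⌋ * T.deg : ℤ) := by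
    rw [Int.cast_mul, ← lift_add_intCast, Int.fract_add_floor]
  rw [toMap, hrep, hlift, circle_coe_add_intCast]

lemma continuous_toMap : Continuous T.toMap := by
  have hcoe : Continuous fun x : ℝ => T.toMap x := by
    simp_rw [toMap_coe]
    exact (AddCircle.continuous_mk' 1).comp T.differentiable_lift.continuous
  exact continuous_coinduced_dom.2 hcoe

section Expanding

variable (hlam : 0 < lam)
include hlam

lemma strictMono_lift : StrictMono T.F :=
  strictMono_of_deriv_pos fun x => hlam.trans_le (T.expanding x)

lemma deg_pos : 0 < T.deg := by
  have hlt := T.strictMono_lift hlam zero_lt_one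
  rw [← zero_add (1 : ℝ), T.lift_add_one 0] at hlt
  exact_mod_cast pos_of_lt_add_right hlt

lemma natCast_toNat_deg : ((T.deg.toNat : ℕ) : ℝ) = T.deg := by
  exact_mod_cast Int.toNat_of_nonneg (T.deg_pos hlam).le

lemma surjective_lift : Function.Surjective T.F := by
  refine T.differentiable_lift.continuous.surjective ?_ ?_
  · refine tendsto_atTop_mono' atTop ?_
      (tendsto_atTop_add_const_right _ (T.F 0) (tendsto_id.const_mul_atTop hlam))
    filter_upwards [eventually_ge_atTop 0] with x hx
    simpa only [id, sub_zero, le_sub_iff_add_le] using T.mul_sub_le_lift_sub hx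
  · refine tendsto_atBot_mono' atBot ?_
      (tendsto_atBot_add_const_right _ (T.F 0) (tendsto_id.const_mul_atBot hlam))
    filter_upwards [eventually_le_atBot 0] with x hx
    have := T.mul_sub_le_lift_sub hx
    simp only [id]
    linarith

end Expanding

/-- The inverse `F⁻¹` of the lift of `T`, a bijection of `ℝ` when `lam > 0`. On an interval
`[T.F z, T.F z + 1]` the inverse branches of the circle map are `y ↦ F⁻¹ (y + i)`, `0 ≤ i < deg`. -/
noncomputable def invLift : ℝ → ℝ := Function.invFun T.F

/-- The derivative of `F⁻¹`, that is the weight `1 / T'` at the preimage. -/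
noncomputable def invLiftDeriv (u : ℝ) : ℝ := (deriv T.F (T.invLift u))⁻¹

/-- The transfer operator of `T` in the coordinate of an arc: if `ψ` is a density on
`[z, z + 1]`, then `T.arcTransfer ψ` is the density of its image on `[T.F z, T.F z + 1]`. -/
noncomputable def arcTransfer (ψ : ℝ → ℝ) (y : ℝ) : ℝ :=
  ∑ i ∈ Finset.range T.deg.toNat, ψ (T.invLift (y + i)) * T.invLiftDeriv (y + i)

section Expanding

variable (hlam : 0 < lam)
include hlam

lemma lift_invLift (u : ℝ) : T.F (T.invLift u) = u :=
  Function.rightInverse_invFun (T.surjective_lift hlam) u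

lemma invLift_lift (x : ℝ) : T.invLift (T.F x) = x :=
  Function.leftInverse_invFun (T.strictMono_lift hlam).injective x

lemma monotone_invLift : Monotone T.invLift := fun u v huv => by
  rwa [← (T.strictMono_lift hlam).le_iff_le, T.lift_invLift hlam, T.lift_invLift hlam]

lemma abs_invLift_sub_le (u v : ℝ) : |T.invLift u - T.invLift v| ≤ |u - v| / lam := by
  wlog huv : v ≤ u generalizing u v
  · simpa only [abs_sub_comm] using this v u (le_of_not_ge huv)
  have hmono := T.monotone_invLift hlam huv
  have hexp := T.mul_sub_le_lift_sub hmono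
  rw [T.lift_invLift hlam, T.lift_invLift hlam] at hexp
  rwa [abs_of_nonneg (sub_nonneg.2 hmono), abs_of_nonneg (sub_nonneg.2 huv), le_div_iff₀' hlam]

lemma continuous_invLift : Continuous T.invLift :=
  (T.monotone_invLift hlam).continuous_of_surjective fun x => ⟨T.F x, T.invLift_lift hlam x⟩

lemma invLiftDeriv_pos (u : ℝ) : 0 < T.invLiftDeriv u :=
  inv_pos.2 (hlam.trans_le (T.expanding _))

lemma invLiftDeriv_le (u : ℝ) : T.invLiftDeriv u ≤ lam⁻¹ :=
  inv_anti₀ hlam (T.expanding _)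

lemma continuous_invLiftDeriv : Continuous T.invLiftDeriv :=
  ((T.contDiff.continuous_deriv (by norm_num)).comp (T.continuous_invLift hlam)).inv₀
    fun _ => (hlam.trans_le (T.expanding _)).ne'

lemma hasDerivAt_invLift (u : ℝ) : HasDerivAt T.invLift (T.invLiftDeriv u) u :=
  HasDerivAt.of_local_left_inverse (T.continuous_invLift hlam).continuousAt
    (T.differentiable_lift _).hasDerivAt (hlam.trans_le (T.expanding _)).ne'
    (Eventually.of_forall (T.lift_invLift hlam))

lemma invLiftDeriv_le_exp_mul (u v : ℝ) :
    T.invLiftDeriv u ≤ Real.exp (Astar / lam ^ 2 * |u - v|) * T.invLiftDeriv v := by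
  set w := T.invLiftDeriv with hw
  have hw_pos : ∀ u, 0 < w u := T.invLiftDeriv_pos hlam
  have hdiff : w u - w v = w u * (deriv T.F (T.invLift v) - deriv T.F (T.invLift u)) * w v := by
    have hu := (hw_pos u).ne'
    have hv := (hw_pos v).ne'
    simp only [hw, invLiftDeriv, ne_eq, inv_eq_zero] at hu hv ⊢
    field_simp
  have hderiv : deriv T.F (T.invLift v) - deriv T.F (T.invLift u) ≤ Astar * (|u - v| / lam) := by
    refine (le_abs_self _).trans ((T.abs_deriv_lift_sub_le _ _).trans ?_)
    rw [abs_sub_comm]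
    exact mul_le_mul_of_nonneg_left (T.abs_invLift_sub_le hlam u v) T.astar_nonneg
  have hdist : w u * (deriv T.F (T.invLift v) - deriv T.F (T.invLift u)) ≤
      Astar / lam ^ 2 * |u - v| := by
    have hA := T.astar_nonneg
    calc _ ≤ w u * (Astar * (|u - v| / lam)) := by
          gcongr
          exact (hw_pos u).le
      _ ≤ lam⁻¹ * (Astar * (|u - v| / lam)) := by
          gcongr
          exact T.invLiftDeriv_le hlam u
      _ = _ := by field_simp
  calc w u = (w u * (deriv T.F (T.invLift v) - deriv T.F (T.invLift u)) + 1) * w v := by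
        linarith
    _ ≤ Real.exp (Astar / lam ^ 2 * |u - v|) * w v := by
        have := (hw_pos v).le
        gcongr
        linarith [Real.add_one_le_exp (Astar / lam ^ 2 * |u - v|)]

lemma invLift_add_natCast_mem_Icc {z y : ℝ} {i : ℕ} (hy : y ∈ Icc (T.F z) (T.F z + 1))
    (hi : i ∈ Finset.range T.deg.toNat) : T.invLift (y + i) ∈ Icc z (z + 1) := by
  have hi' : (i : ℝ) + 1 ≤ T.deg := by
    rw [← T.natCast_toNat_deg hlam]
    exact_mod_cast Finset.mem_range.1 hi
  have hle {a b : ℝ} : T.F a ≤ T.F b ↔ a ≤ b := (T.strictMono_lift hlam).le_iff_le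
  rw [mem_Icc, ← hle, ← hle (b := z + 1), T.lift_invLift hlam, T.lift_add_one]
  constructor <;> linarith [hy.1, hy.2, (Nat.cast_nonneg i : (0 : ℝ) ≤ i)]

lemma continuous_arcTransfer {ψ : ℝ → ℝ} (hψ : Continuous ψ) : Continuous (T.arcTransfer ψ) := by
  have hinv := T.continuous_invLift hlam
  have hderiv := T.continuous_invLiftDeriv hlam
  unfold arcTransfer
  fun_prop

/-- Substitute `x = F⁻¹ u` on `[F z, F z + deg]` and fold this interval onto one period. -/
lemma integral_arcTransfer_mul {ψ : ℝ → ℝ} (hψ : Continuous ψ) {g : Circle1 → ℝ}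
    (hg : Continuous g) (z : ℝ) :
    ∫ y in T.F z..T.F z + 1, T.arcTransfer ψ y * g y =
      ∫ x in z..z + 1, ψ x * g (T.toMap x) := by
  have hderiv := T.continuous_invLiftDeriv hlam
  set q : ℝ → ℝ := fun u => ψ (T.invLift u) * T.invLiftDeriv u * g u with hq
  have hqc : Continuous q :=
    ((hψ.comp (T.continuous_invLift hlam)).mul hderiv).mul (continuous_comp_coe hg)
  have hfold (y : ℝ) : T.arcTransfer ψ y * g y = ∑ i ∈ Finset.range T.deg.toNat, q (y + i) := by
    rw [arcTransfer, Finset.sum_mul]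
    refine Finset.sum_congr rfl fun i _ => ?_
    rw [hq, ← circle_coe_add_intCast y i, Int.cast_natCast]
  have hsubst : ∫ u in T.F z..T.F (z + 1), q u = ∫ x in z..z + 1, ψ x * g (T.toMap x) := by
    have h := intervalIntegral.integral_comp_mul_deriv (a := T.F z) (b := T.F (z + 1))
      (g := fun x => ψ x * g (T.toMap x)) (fun u _ => T.hasDerivAt_invLift hlam u)
      hderiv.continuousOn (hψ.mul (continuous_comp_coe (hg.comp T.continuous_toMap)))
    rw [T.invLift_lift hlam, T.invLift_lift hlam] at h
    rw [← h]
    refine intervalIntegral.integral_congr fun u _ => ?_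
    simp only [hq, Function.comp_apply, toMap_coe, T.lift_invLift hlam]
    ring
  simp_rw [hfold]
  rw [← integral_add_natCast_eq_integral_sum hqc, T.natCast_toNat_deg hlam, ← T.lift_add_one,
    hsubst]

lemma integral_arcTransfer {ψ : ℝ → ℝ} (hψ : Continuous ψ) (z : ℝ) :
    ∫ y in T.F z..T.F z + 1, T.arcTransfer ψ y = ∫ x in z..z + 1, ψ x := by
  simpa using T.integral_arcTransfer_mul hlam hψ (g := fun _ => 1) continuous_const z

end Expanding

end CM

lemma continuous_mapIter {lam Astar : ℝ} (Ts : ℕ → CM lam Astar) (N : ℕ) :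
    Continuous (mapIter Ts N) := by
  induction N with
  | zero => exact continuous_id
  | succ N ih => exact (Ts (N + 1)).continuous_toMap.comp ih

lemma mapIter_add {lam Astar : ℝ} (Ts : ℕ → CM lam Astar) (a N : ℕ) (x : Circle1) :
    mapIter Ts (a + N) x = mapIter (fun i => Ts (a + i)) N (mapIter Ts a x) := by
  induction N with
  | zero => rfl
  | succ N ih => exact congrArg (Ts (a + (N + 1))).toMap ih

lemma arrIter_eq_mapIter {lam Astar : ℝ} (Tarr : ℕ → ℕ → CM lam Astar) (n k : ℕ) :
    arrIter Tarr n k = mapIter (Tarr n) k := by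
  induction k with
  | zero => rfl
  | succ k ih => exact congrArg ((Tarr n (k + 1)).toMap ∘ ·) ih

/-! ### Cones of log-Lipschitz densities -/

/-- The cone of densities on the arc `[z, z + 1]` whose logarithm is `M`-Lipschitz, in the
division-free form that admits the zero density. The values of `φ` outside the arc only matter
for continuity. -/
structure LogLipCone (M z : ℝ) (φ : ℝ → ℝ) : Prop where
  continuous : Continuous φ
  nonneg : ∀ x ∈ Icc z (z + 1), 0 ≤ φ x
  le_exp_mul : ∀ x ∈ Icc z (z + 1), ∀ y ∈ Icc z (z + 1),
    φ x ≤ Real.exp (M * |x - y|) * φ y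

namespace LogLipCone

variable {M M' z : ℝ} {φ φ₁ φ₂ : ℝ → ℝ}

lemma mono (h : LogLipCone M z φ) (hM : M ≤ M') : LogLipCone M' z φ where
  continuous := h.continuous
  nonneg := h.nonneg
  le_exp_mul x hx y hy := (h.le_exp_mul x hx y hy).trans <|
    mul_le_mul_of_nonneg_right (by gcongr) (h.nonneg y hy)

lemma add (h₁ : LogLipCone M z φ₁) (h₂ : LogLipCone M z φ₂) :
    LogLipCone M z fun x => φ₁ x + φ₂ x where
  continuous := h₁.continuous.add h₂.continuous
  nonneg x hx := add_nonneg (h₁.nonneg x hx) (h₂.nonneg x hx)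
  le_exp_mul x hx y hy := by
    rw [mul_add]
    exact add_le_add (h₁.le_exp_mul x hx y hy) (h₂.le_exp_mul x hx y hy)

lemma mul (h₁ : LogLipCone M z φ₁) (h₂ : LogLipCone M' z φ₂) :
    LogLipCone (M + M') z fun x => φ₁ x * φ₂ x where
  continuous := h₁.continuous.mul h₂.continuous
  nonneg x hx := mul_nonneg (h₁.nonneg x hx) (h₂.nonneg x hx)
  le_exp_mul x hx y hy := by
    rw [add_mul, Real.exp_add, mul_mul_mul_comm]
    exact mul_le_mul (h₁.le_exp_mul x hx y hy) (h₂.le_exp_mul x hx y hy) (h₂.nonneg x hx)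
      (mul_nonneg (Real.exp_pos _).le (h₁.nonneg y hy))

lemma const (hM : 0 ≤ M) (z : ℝ) {c : ℝ} (hc : 0 ≤ c) : LogLipCone M z fun _ => c where
  continuous := continuous_const
  nonneg _ _ := hc
  le_exp_mul x _ y _ := le_mul_of_one_le_left hc (Real.one_le_exp (by positivity))

lemma add_const {f : ℝ → ℝ} {K ε : ℝ} (hf : Continuous f) (hK : 0 ≤ K) (hε : 0 < ε)
    (hbound : ∀ x ∈ Icc z (z + 1), |f x| ≤ K)
    (hlip : ∀ x ∈ Icc z (z + 1), ∀ y ∈ Icc z (z + 1), |f x - f y| ≤ K * |x - y|) :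
    LogLipCone ε z fun x => f x + (K + K / ε) := by
  have hlower : ∀ x ∈ Icc z (z + 1), K / ε ≤ f x + (K + K / ε) := fun x hx => by
    linarith [(abs_le.1 (hbound x hx)).1]
  refine ⟨hf.add continuous_const, fun x hx => le_trans (by positivity) (hlower x hx),
    fun x hx y hy => ?_⟩
  have hKε : K ≤ (f y + (K + K / ε)) * ε := (div_le_iff₀ hε).1 (hlower y hy)
  have hnonneg : 0 ≤ f y + (K + K / ε) := le_trans (by positivity) (hlower y hy)
  calc f x + (K + K / ε) ≤ f y + (K + K / ε) + K * |x - y| := by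
        linarith [(abs_le.1 (hlip x hx y hy)).2]
    _ ≤ f y + (K + K / ε) + (f y + (K + K / ε)) * ε * |x - y| := by gcongr
    _ = (ε * |x - y| + 1) * (f y + (K + K / ε)) := by ring
    _ ≤ Real.exp (ε * |x - y|) * (f y + (K + K / ε)) := by
        gcongr
        exact Real.add_one_le_exp _

/-- The part `(1 - a) φ` of `φ` can be traded for regularity: by convexity,
`exp (a M d) ≤ a exp (M d) + (1 - a)`. -/
lemma sub_const {a c : ℝ} (h : LogLipCone (a * M) z φ) (hM : 0 ≤ M) (ha : a ∈ Icc (0 : ℝ) 1)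
    (hc : ∀ x ∈ Icc z (z + 1), c ≤ (1 - a) * φ x) : LogLipCone M z fun x => φ x - c where
  continuous := h.continuous.sub continuous_const
  nonneg x hx := by linarith [hc x hx, mul_nonneg ha.1 (h.nonneg x hx)]
  le_exp_mul x hx y hy := by
    set E := Real.exp (M * |x - y|)
    have hE : 1 ≤ E := Real.one_le_exp (by positivity)
    have hconv : Real.exp (a * M * |x - y|) ≤ a * E + (1 - a) := by
      simpa [mul_assoc] using convexOn_exp.2 (mem_univ (M * |x - y|)) (mem_univ 0) ha.1
        (sub_nonneg.2 ha.2) (by ring)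
    calc φ x - c ≤ Real.exp (a * M * |x - y|) * φ y - c :=
          sub_le_sub_right (h.le_exp_mul x hx y hy) c
      _ ≤ (a * E + (1 - a)) * φ y - c :=
          sub_le_sub_right (mul_le_mul_of_nonneg_right hconv (h.nonneg y hy)) c
      _ ≤ E * (φ y - c) := by
          linarith [mul_le_mul_of_nonneg_left (hc y hy) (sub_nonneg.2 hE)]

lemma integral_nonneg (h : LogLipCone M z φ) : 0 ≤ ∫ x in z..z + 1, φ x :=
  intervalIntegral.integral_nonneg (lt_add_one z).le h.nonneg

lemma abs_integral_mul_le (h : LogLipCone M z φ) {g : ℝ → ℝ} {Γ : ℝ}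
    (hΓ : ∀ x ∈ Icc z (z + 1), |g x| ≤ Γ) :
    |∫ x in z..z + 1, φ x * g x| ≤ (∫ x in z..z + 1, φ x) * Γ := by
  rw [← intervalIntegral.integral_mul_const]
  have hbound : ∀ x ∈ Ioc z (z + 1), ‖φ x * g x‖ ≤ φ x * Γ := fun x hx => by
    have hx' := Ioc_subset_Icc_self hx
    rw [Real.norm_eq_abs, abs_mul, abs_of_nonneg (h.nonneg x hx')]
    exact mul_le_mul_of_nonneg_left (hΓ x hx') (h.nonneg x hx')
  exact intervalIntegral.norm_integral_le_of_norm_le (lt_add_one z).le (.of_forall hbound)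
    ((h.continuous.mul_const Γ).intervalIntegrable _ _)

lemma integral_le_exp_mul (h : LogLipCone M z φ) (hM : 0 ≤ M) {y : ℝ}
    (hy : y ∈ Icc z (z + 1)) : ∫ x in z..z + 1, φ x ≤ Real.exp M * φ y := by
  have hbound : ∀ x ∈ Icc z (z + 1), φ x ≤ Real.exp M * φ y := fun x hx =>
    (h.le_exp_mul x hx y hy).trans <| mul_le_mul_of_nonneg_right
      (Real.exp_le_exp.2 (mul_le_of_le_one_right hM (abs_sub_le_one_of_mem_Icc hx hy)))
      (h.nonneg y hy)
  simpa using intervalIntegral.integral_mono_on (μ := volume) (lt_add_one z).le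
    (h.continuous.intervalIntegrable _ _) (continuous_const.intervalIntegrable _ _) hbound

lemma integral_mul_sub_integral_mul (h₁ : LogLipCone M z φ₁) (h₂ : LogLipCone M z φ₂)
    {g : Circle1 → ℝ} (hg : Continuous g) :
    (∫ x in z..z + 1, φ₁ x * g x) - ∫ x in z..z + 1, φ₂ x * g x =
      ∫ x in z..z + 1, (φ₁ x - φ₂ x) * g x := by
  have hg' := continuous_comp_coe hg
  simp only [sub_mul]
  exact (intervalIntegral.integral_sub ((h₁.continuous.mul hg').intervalIntegrable _ _)
    ((h₂.continuous.mul hg').intervalIntegrable _ _)).symm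

/-- With `R = K + K / ε`, both `f + R` and `R` are `ε`-log-Lipschitz, and
`f (φ₁ - φ₂) = ((f + R) φ₁ + R φ₂) - (R φ₁ + (f + R) φ₂)`. -/
lemma exists_sub_eq_mul_sub (h₁ : LogLipCone M z φ₁) (h₂ : LogLipCone M z φ₂) {f : ℝ → ℝ}
    {K ε : ℝ} (hf : Continuous f) (hK : 0 ≤ K) (hε : 0 < ε)
    (hbound : ∀ x ∈ Icc z (z + 1), |f x| ≤ K)
    (hlip : ∀ x ∈ Icc z (z + 1), ∀ y ∈ Icc z (z + 1), |f x - f y| ≤ K * |x - y|) :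
    ∃ ψ₁ ψ₂ : ℝ → ℝ, LogLipCone (M + ε) z ψ₁ ∧ LogLipCone (M + ε) z ψ₂ ∧
      (∫ x in z..z + 1, ψ₁ x) + (∫ x in z..z + 1, ψ₂ x) ≤
        ((∫ x in z..z + 1, φ₁ x) + ∫ x in z..z + 1, φ₂ x) * (K * (3 + 2 / ε)) ∧
      ∀ x, ψ₁ x - ψ₂ x = f x * (φ₁ x - φ₂ x) := by
  set R : ℝ := K + K / ε with hR
  have hR0 : 0 ≤ R := by positivity
  have hfR : LogLipCone ε z fun x => f x + R := .add_const hf hK hε hbound hlip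
  have hRcone : LogLipCone ε z fun _ => R := .const hε.le z hR0
  have hψ₁ := (h₁.mul hfR).add (h₂.mul hRcone)
  have hψ₂ := (h₁.mul hRcone).add (h₂.mul hfR)
  refine ⟨_, _, hψ₁, hψ₂, ?_, fun x => by ring⟩
  rw [← intervalIntegral.integral_add (hψ₁.continuous.intervalIntegrable _ _)
    (hψ₂.continuous.intervalIntegrable _ _), ← intervalIntegral.integral_add
    (h₁.continuous.intervalIntegrable _ _) (h₂.continuous.intervalIntegrable _ _)]
  have hsum : ∀ x ∈ Icc z (z + 1), |f x + 2 * R| ≤ K + 2 * R := fun x hx =>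
    (abs_add_le _ _).trans (add_le_add (hbound x hx) (abs_of_nonneg (by positivity)).le)
  calc _ = ∫ x in z..z + 1, (φ₁ x + φ₂ x) * (f x + 2 * R) := by
        congr 1 with x
        ring
    _ ≤ (∫ x in z..z + 1, (φ₁ x + φ₂ x)) * (K + 2 * R) :=
        (le_abs_self _).trans ((h₁.add h₂).abs_integral_mul_le hsum)
    _ = _ := by
        rw [hR]
        ring

variable {lam Astar : ℝ}

lemma arcTransfer (h : LogLipCone M z φ) (T : CM lam Astar) (hlam : 0 < lam) (hM : 0 ≤ M) :
    LogLipCone (M / lam + Astar / lam ^ 2) (T.F z) (T.arcTransfer φ) := by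
  have hmem {y : ℝ} (hy : y ∈ Icc (T.F z) (T.F z + 1)) {i : ℕ}
      (hi : i ∈ Finset.range T.deg.toNat) := T.invLift_add_natCast_mem_Icc hlam hy hi
  refine ⟨T.continuous_arcTransfer hlam h.continuous, fun y hy => Finset.sum_nonneg fun i hi =>
    mul_nonneg (h.nonneg _ (hmem hy hi)) (T.invLiftDeriv_pos hlam _).le, fun x hx y hy => ?_⟩
  simp only [CM.arcTransfer, Finset.mul_sum]
  refine Finset.sum_le_sum fun i hi => ?_
  set u := T.invLift (x + i)
  set v := T.invLift (y + i)
  have hdist : |x + i - (y + i)| = |x - y| := by rw [add_sub_add_right_eq_sub]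
  have hφ : φ u ≤ Real.exp (M / lam * |x - y|) * φ v := by
    refine (h.le_exp_mul u (hmem hx hi) v (hmem hy hi)).trans ?_
    have huv : |u - v| ≤ |x - y| / lam := hdist ▸ T.abs_invLift_sub_le hlam (x + i) (y + i)
    rw [div_mul_eq_mul_div, mul_div_assoc]
    exact mul_le_mul_of_nonneg_right (by gcongr) (h.nonneg v (hmem hy hi))
  have hw := T.invLiftDeriv_le_exp_mul hlam (x + i) (y + i)
  rw [hdist] at hw
  calc φ u * T.invLiftDeriv (x + i)
      ≤ (Real.exp (M / lam * |x - y|) * φ v) *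
          (Real.exp (Astar / lam ^ 2 * |x - y|) * T.invLiftDeriv (y + i)) :=
        mul_le_mul hφ hw (T.invLiftDeriv_pos hlam _).le
          (mul_nonneg (Real.exp_pos _).le (h.nonneg v (hmem hy hi)))
    _ = Real.exp ((M / lam + Astar / lam ^ 2) * |x - y|) * (φ v * T.invLiftDeriv (y + i)) := by
        rw [add_mul, Real.exp_add]
        ring

end LogLipCone

/-- The factor by which one step contracts the difference of two densities in `LogLipCone M z` of
equal mass, when the transfer operator maps this cone into the narrower one of constant `a * M`. -/
noncomputable def contractionFactor (a M : ℝ) : ℝ := 1 - (1 - a) * Real.exp (-(a * M))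

lemma contractionFactor_pos {a M : ℝ} (ha : 0 < a) (ha' : a ≤ 1) (hM : 0 ≤ M) :
    0 < contractionFactor a M := by
  have hexp : Real.exp (-(a * M)) ≤ 1 := Real.exp_le_one_iff.2 (by nlinarith)
  rw [contractionFactor]
  nlinarith

lemma contractionFactor_lt_one {a M : ℝ} (ha : a < 1) : contractionFactor a M < 1 :=
  sub_lt_self _ (mul_pos (sub_pos.2 ha) (Real.exp_pos _))

section Contraction

variable {lam Astar a M z : ℝ} {φ φ₁ φ₂ : ℝ → ℝ}

/-- The constant subtracted from the image is a lower bound for `(1 - a) * T.arcTransfer φ`. -/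
lemma LogLipCone.arcTransfer_sub_const (h : LogLipCone M z φ) (T : CM lam Astar) (hlam : 0 < lam)
    (hM : 0 ≤ M) (ha : a ∈ Icc (0 : ℝ) 1) (haM : M / lam + Astar / lam ^ 2 ≤ a * M) :
    LogLipCone M (T.F z) fun y =>
      T.arcTransfer φ y - (1 - a) * Real.exp (-(a * M)) * ∫ x in z..z + 1, φ x := by
  have hP := (h.arcTransfer T hlam hM).mono haM
  refine hP.sub_const hM ha fun y hy => ?_
  rw [mul_assoc, ← T.integral_arcTransfer hlam h.continuous]
  refine mul_le_mul_of_nonneg_left ?_ (sub_nonneg.2 ha.2)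
  rw [Real.exp_neg, inv_mul_le_iff₀ (Real.exp_pos _)]
  exact hP.integral_le_exp_mul (mul_nonneg ha.1 hM) hy

lemma LogLipCone.exists_integral_comp_eq_add (h : LogLipCone M z φ) (T : CM lam Astar)
    (hlam : 0 < lam) (hM : 0 ≤ M) (ha : a ∈ Icc (0 : ℝ) 1)
    (haM : M / lam + Astar / lam ^ 2 ≤ a * M) :
    ∃ ψ : ℝ → ℝ, LogLipCone M (T.F z) ψ ∧
      ∫ y in T.F z..T.F z + 1, ψ y = contractionFactor a M * ∫ x in z..z + 1, φ x ∧
      ∀ g : Circle1 → ℝ, Continuous g →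
        ∫ x in z..z + 1, φ x * g (T.toMap x) = (∫ y in T.F z..T.F z + 1, ψ y * g y) +
          (1 - a) * Real.exp (-(a * M)) * (∫ x in z..z + 1, φ x) * ∫ x : Circle1, g x := by
  set c := (1 - a) * Real.exp (-(a * M)) * ∫ x in z..z + 1, φ x
  have hP := T.continuous_arcTransfer hlam h.continuous
  have hsplit (g : Circle1 → ℝ) (hg : Continuous g) :
      ∫ x in z..z + 1, φ x * g (T.toMap x) =
        (∫ y in T.F z..T.F z + 1, (T.arcTransfer φ y - c) * g y) + c * ∫ x : Circle1, g x := by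
    have hg' := continuous_comp_coe hg
    rw [← T.integral_arcTransfer_mul hlam h.continuous hg,
      ← AddCircle.intervalIntegral_preimage 1 (T.F z), ← intervalIntegral.integral_const_mul,
      ← intervalIntegral.integral_add
        (((hP.fun_sub continuous_const).fun_mul hg').intervalIntegrable _ _)
        ((hg'.const_mul c).intervalIntegrable _ _)]
    simp_rw [← add_mul, sub_add_cancel]
  refine ⟨_, h.arcTransfer_sub_const T hlam hM ha haM, ?_, hsplit⟩
  rw [intervalIntegral.integral_sub (hP.intervalIntegrable _ _) intervalIntegrable_const,
    T.integral_arcTransfer hlam h.continuous, intervalIntegral.integral_const,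
    add_sub_cancel_left, one_smul, contractionFactor]
  ring

lemma exists_logLipCone_integral_eq_contractionFactor_pow (hlam : 0 < lam) (hM : 0 ≤ M)
    (ha : a ∈ Icc (0 : ℝ) 1) (haM : M / lam + Astar / lam ^ 2 ≤ a * M) (Ts : ℕ → CM lam Astar)
    (h₁ : LogLipCone M z φ₁) (h₂ : LogLipCone M z φ₂)
    (heq : ∫ x in z..z + 1, φ₁ x = ∫ x in z..z + 1, φ₂ x) (N : ℕ) :
    ∃ (y : ℝ) (ψ₁ ψ₂ : ℝ → ℝ), LogLipCone M y ψ₁ ∧ LogLipCone M y ψ₂ ∧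
      ∫ x in y..y + 1, ψ₁ x = contractionFactor a M ^ N * ∫ x in z..z + 1, φ₁ x ∧
      ∫ x in y..y + 1, ψ₂ x = contractionFactor a M ^ N * ∫ x in z..z + 1, φ₁ x ∧
      ∀ g : Circle1 → ℝ, Continuous g →
        (∫ x in z..z + 1, φ₁ x * g (mapIter Ts N x)) -
            ∫ x in z..z + 1, φ₂ x * g (mapIter Ts N x) =
          (∫ x in y..y + 1, ψ₁ x * g x) - ∫ x in y..y + 1, ψ₂ x * g x := by
  induction N with
  | zero => exact ⟨z, φ₁, φ₂, h₁, h₂, by simp, by simp [heq], fun g _ => rfl⟩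
  | succ N ih =>
    obtain ⟨y, ψ₁, ψ₂, hψ₁, hψ₂, hI₁, hI₂, hψ⟩ := ih
    set T := Ts (N + 1) with hT
    obtain ⟨χ₁, hχ₁, hJ₁, hg₁⟩ := hψ₁.exists_integral_comp_eq_add T hlam hM ha haM
    obtain ⟨χ₂, hχ₂, hJ₂, hg₂⟩ := hψ₂.exists_integral_comp_eq_add T hlam hM ha haM
    refine ⟨T.F y, χ₁, χ₂, hχ₁, hχ₂, by rw [hJ₁, hI₁]; ring, by rw [hJ₂, hI₂]; ring,
      fun g hg => ?_⟩
    have hstep := hψ _ (hg.comp T.continuous_toMap)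
    simp only [Function.comp_apply] at hstep
    simp only [mapIter, Function.comp_apply, ← hT]
    rw [hstep, hg₁ g hg, hg₂ g hg, hI₁, hI₂, add_sub_add_right_eq_sub]

lemma LogLipCone.abs_integral_sub_integral_le (hlam : 0 < lam) (hM : 0 ≤ M)
    (ha : a ∈ Icc (0 : ℝ) 1) (haM : M / lam + Astar / lam ^ 2 ≤ a * M) (Ts : ℕ → CM lam Astar)
    (h₁ : LogLipCone M z φ₁) (h₂ : LogLipCone M z φ₂)
    (heq : ∫ x in z..z + 1, φ₁ x = ∫ x in z..z + 1, φ₂ x) (N : ℕ) {G : Circle1 → ℝ}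
    (hG : Continuous G) {Γ : ℝ} (hΓ : ∀ x, |G x| ≤ Γ) :
    |(∫ x in z..z + 1, φ₁ x * G (mapIter Ts N x)) -
        ∫ x in z..z + 1, φ₂ x * G (mapIter Ts N x)| ≤
      2 * (∫ x in z..z + 1, φ₁ x) * Γ * contractionFactor a M ^ N := by
  obtain ⟨y, ψ₁, ψ₂, hψ₁, hψ₂, hI₁, hI₂, hg⟩ :=
    exists_logLipCone_integral_eq_contractionFactor_pow hlam hM ha haM Ts h₁ h₂ heq N
  have hle₁ := hψ₁.abs_integral_mul_le fun x _ => hΓ x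
  have hle₂ := hψ₂.abs_integral_mul_le fun x _ => hΓ x
  rw [hI₁] at hle₁
  rw [hI₂] at hle₂
  rw [hg G hG]
  exact (abs_sub _ _).trans (by linarith)

/-- Compare `φ` with the constant density of the same mass. -/
lemma LogLipCone.abs_integral_sub_mul_integral_le (h : LogLipCone M z φ) (hlam : 0 < lam)
    (hM : 0 ≤ M) (ha : a ∈ Icc (0 : ℝ) 1) (haM : M / lam + Astar / lam ^ 2 ≤ a * M)
    (Ts : ℕ → CM lam Astar) (N : ℕ) {G : Circle1 → ℝ} (hG : Continuous G) {Γ : ℝ}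
    (hΓ : ∀ x, |G x| ≤ Γ) :
    |(∫ x in z..z + 1, φ x * G (mapIter Ts N x)) -
        (∫ x in z..z + 1, φ x) * ∫ x : Circle1, G (mapIter Ts N x)| ≤
      2 * (∫ x in z..z + 1, φ x) * Γ * contractionFactor a M ^ N := by
  have hconst := h.abs_integral_sub_integral_le hlam hM ha haM Ts (.const hM z h.integral_nonneg)
    (by simp) N hG hΓ
  rwa [intervalIntegral.integral_const_mul,
    AddCircle.intervalIntegral_preimage 1 z fun x => G (mapIter Ts N x)] at hconst

end Contraction

/-! ### Differences of two densities in the cone -/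

lemma LipOnArc.exists_lipschitzWith_eqOn {ρ : Circle1 → ℝ} {z : Circle1} {L : ℝ}
    (h : LipOnArc z L ρ) (hL : 0 ≤ L) :
    ∃ g : ℝ → ℝ, LipschitzWith L.toNNReal g ∧
      EqOn (fun x : ℝ => ρ x) g (Ioo (zrep z) (zrep z + 1)) := by
  have hne : ∀ x ∈ Ioo (zrep z) (zrep z + 1), (x : Circle1) ≠ z := fun x hx hxz => by
    have hz : ((zrep z : ℝ) : Circle1) = z := (AddCircle.equivIco 1 0).symm_apply_apply z
    rw [← hz] at hxz
    exact hx.1.ne' ((AddCircle.coe_eq_coe_iff_of_mem_Ico (Ioo_subset_Ico_self hx)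
      (left_mem_Ico.2 (lt_add_one _))).1 hxz)
  have hcoord : ∀ x ∈ Ioo (zrep z) (zrep z + 1), arcCoord z x = x := fun x hx =>
    AddCircle.equivIoc_coe_of_mem (Ioo_subset_Ioc_self hx)
  refine LipschitzOnWith.extend_real (.of_dist_le_mul fun x hx y hy => ?_)
  rw [Real.dist_eq, Real.dist_eq, Real.coe_toNNReal _ hL]
  simpa only [arcDist, hcoord x hx, hcoord y hy] using h x y (hne x hx) (hne y hy)

lemma abs_le_one_add_of_integral_eq_one {h : ℝ → ℝ} {z L : ℝ} (hh : Continuous h) (hL : 0 ≤ L)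
    (hmean : ∫ x in z..z + 1, h x = 1)
    (hlip : ∀ x ∈ Icc z (z + 1), ∀ y ∈ Icc z (z + 1), |h x - h y| ≤ L * |x - y|) :
    ∀ x ∈ Icc z (z + 1), |h x| ≤ 1 + L := by
  intro x hx
  have hsub : ∫ y in z..z + 1, (h x - h y) = h x - 1 := by
    rw [intervalIntegral.integral_sub intervalIntegrable_const (hh.intervalIntegrable _ _), hmean]
    simp
  have hdev : |h x - 1| ≤ L := by
    rw [← hsub]
    have hbound := intervalIntegral.norm_integral_le_of_norm_le_const (a := z) (b := z + 1)
      (f := fun y => h x - h y) (C := L) fun y hy => by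
        rw [uIoc_of_le (lt_add_one z).le] at hy
        have hy' := Ioc_subset_Icc_self hy
        exact (hlip x hx y hy').trans
          (mul_le_of_le_one_right hL (abs_sub_le_one_of_mem_Icc hx hy'))
    simpa using hbound
  rw [abs_le] at hdev ⊢
  constructor <;> linarith

/-- The image under `S` of the signed measure with density `w` is, seen on some arc `[z, z + 1]`,
the difference of two densities in `LogLipCone M z` of total mass at most `Q`. The image is
expressed by its integrals against continuous functions. -/
def HasConeDensity (M Q : ℝ) (S : Circle1 → Circle1) (w : Circle1 → ℝ) : Prop :=
  ∃ (z : ℝ) (φ₁ φ₂ : ℝ → ℝ), LogLipCone M z φ₁ ∧ LogLipCone M z φ₂ ∧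
    (∫ x in z..z + 1, φ₁ x) + (∫ x in z..z + 1, φ₂ x) ≤ Q ∧
    ∀ g : Circle1 → ℝ, Continuous g →
      ∫ x : Circle1, w x * g (S x) =
        (∫ x in z..z + 1, φ₁ x * g x) - ∫ x in z..z + 1, φ₂ x * g x

namespace HasConeDensity

variable {lam Astar M Q : ℝ} {S : Circle1 → Circle1} {w : Circle1 → ℝ}

lemma mono {M' Q' : ℝ} (h : HasConeDensity M Q S w) (hM : M ≤ M') (hQ : Q ≤ Q') :
    HasConeDensity M' Q' S w := by
  obtain ⟨z, φ₁, φ₂, h₁, h₂, hmass, hw⟩ := h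
  exact ⟨z, φ₁, φ₂, h₁.mono hM, h₂.mono hM, hmass.trans hQ, hw⟩

lemma integral_eq_sub {z : ℝ} {φ₁ φ₂ : ℝ → ℝ}
    (hw : ∀ g : Circle1 → ℝ, Continuous g → ∫ x : Circle1, w x * g (S x) =
      (∫ x in z..z + 1, φ₁ x * g x) - ∫ x in z..z + 1, φ₂ x * g x) :
    ∫ x : Circle1, w x = (∫ x in z..z + 1, φ₁ x) - ∫ x in z..z + 1, φ₂ x := by
  simpa only [mul_one] using hw (fun _ => 1) continuous_const

lemma abs_integral_le (h : HasConeDensity M Q S w) : |∫ x : Circle1, w x| ≤ Q := by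
  obtain ⟨z, φ₁, φ₂, h₁, h₂, hQ, hw⟩ := h
  rw [integral_eq_sub hw]
  refine (abs_sub _ _).trans ?_
  rwa [abs_of_nonneg h₁.integral_nonneg, abs_of_nonneg h₂.integral_nonneg]

lemma toMap_comp (h : HasConeDensity M Q S w) (T : CM lam Astar) (hlam : 0 < lam) (hM : 0 ≤ M)
    (hinv : M / lam + Astar / lam ^ 2 ≤ M) : HasConeDensity M Q (T.toMap ∘ S) w := by
  obtain ⟨z, φ₁, φ₂, h₁, h₂, hQ, hw⟩ := h
  refine ⟨T.F z, T.arcTransfer φ₁, T.arcTransfer φ₂, (h₁.arcTransfer T hlam hM).mono hinv,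
    (h₂.arcTransfer T hlam hM).mono hinv, ?_, fun g hg => ?_⟩
  · rwa [T.integral_arcTransfer hlam h₁.continuous, T.integral_arcTransfer hlam h₂.continuous]
  · rw [T.integral_arcTransfer_mul hlam h₁.continuous hg,
      T.integral_arcTransfer_mul hlam h₂.continuous hg]
    exact hw _ (hg.comp T.continuous_toMap)

lemma mapIter_of_le {Ts : ℕ → CM lam Astar} {a s : ℕ} (h : HasConeDensity M Q (mapIter Ts a) w)
    (has : a ≤ s) (hlam : 0 < lam) (hM : 0 ≤ M) (hinv : M / lam + Astar / lam ^ 2 ≤ M) :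
    HasConeDensity M Q (mapIter Ts s) w := by
  induction s, has using Nat.le_induction with
  | base => exact h
  | succ s _ ih => exact ih.toMap_comp (Ts (s + 1)) hlam hM hinv

lemma mul_comp (h : HasConeDensity M Q S w) {f : Circle1 → ℝ} {K : NNReal} {ε : ℝ} (hε : 0 < ε)
    (hbound : ∀ x, |f x| ≤ K) (hlip : LipschitzWith K f) :
    HasConeDensity (M + ε) (Q * (K * (3 + 2 / ε))) S fun x => f (S x) * w x := by
  obtain ⟨z, φ₁, φ₂, h₁, h₂, hQ, hw⟩ := h
  obtain ⟨ψ₁, ψ₂, hψ₁, hψ₂, hmass, hψ⟩ := h₁.exists_sub_eq_mul_sub h₂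
    (continuous_comp_coe hlip.continuous) K.coe_nonneg hε (fun x _ => hbound x) fun x _ y _ =>
      (hlip.dist_le_mul (x : Circle1) y).trans
        (mul_le_mul_of_nonneg_left (circle_dist_coe_le x y) K.coe_nonneg)
  refine ⟨z, ψ₁, ψ₂, hψ₁, hψ₂, hmass.trans (mul_le_mul_of_nonneg_right hQ (by positivity)),
    fun g hg => ?_⟩
  have hfg : Continuous fun y => f y * g y := hlip.continuous.fun_mul hg
  calc ∫ x : Circle1, f (S x) * w x * g (S x) = ∫ x : Circle1, w x * (f (S x) * g (S x)) := by
        congr 1 with x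
        ring
    _ = ∫ x in z..z + 1, (φ₁ x - φ₂ x) * (f x * g x) :=
        (hw _ hfg).trans (h₁.integral_mul_sub_integral_mul h₂ hfg)
    _ = ∫ x in z..z + 1, (ψ₁ x - ψ₂ x) * g x := by
        congr 1 with x
        rw [hψ]
        ring
    _ = _ := (hψ₁.integral_mul_sub_integral_mul hψ₂ hg).symm

lemma of_lipOnArc {ρ : Circle1 → ℝ} {z : Circle1} {L : ℝ} (hρ : ∫ x : Circle1, ρ x = 1)
    (hL : 0 ≤ L) (hlip : LipOnArc z L ρ) (hM : 0 < M) :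
    HasConeDensity M ((1 + L) * (3 + 2 / M)) id ρ := by
  obtain ⟨h, hh, hhρ⟩ := hlip.exists_lipschitzWith_eqOn hL
  have hrep (g : Circle1 → ℝ) :
      ∫ x : Circle1, ρ x * g x = ∫ x in zrep z..zrep z + 1, h x * g x := by
    rw [← AddCircle.intervalIntegral_preimage 1 (zrep z),
      intervalIntegral.integral_of_le (lt_add_one _).le,
      intervalIntegral.integral_of_le (lt_add_one _).le, integral_Ioc_eq_integral_Ioo,
      integral_Ioc_eq_integral_Ioo]
    exact setIntegral_congr_fun measurableSet_Ioo fun x hx => by simp only [hhρ hx]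
  have hmean : ∫ x in zrep z..zrep z + 1, h x = 1 := by
    simpa only [mul_one, hρ] using (hrep fun _ => 1).symm
  have hdiff : ∀ x ∈ Icc (zrep z) (zrep z + 1), ∀ y ∈ Icc (zrep z) (zrep z + 1),
      |h x - h y| ≤ L * |x - y| := fun x _ y _ => by
    simpa only [Real.dist_eq, Real.coe_toNNReal L hL] using hh.dist_le_mul x y
  obtain ⟨ψ₁, ψ₂, hψ₁, hψ₂, hmass, hψ⟩ :=
    (LogLipCone.const le_rfl (zrep z) zero_le_one).exists_sub_eq_mul_sub
      (LogLipCone.const le_rfl (zrep z) le_rfl) hh.continuous (by positivity) hM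
      (abs_le_one_add_of_integral_eq_one hh.continuous hL hmean hdiff) fun x hx y hy =>
        (hdiff x hx y hy).trans (by gcongr; linarith)
  rw [zero_add] at hψ₁ hψ₂
  refine ⟨zrep z, ψ₁, ψ₂, hψ₁, hψ₂, by simpa using hmass, fun g hg => ?_⟩
  rw [hψ₁.integral_mul_sub_integral_mul hψ₂ hg]
  simpa only [hψ, sub_zero, mul_one, id] using hrep g

lemma abs_integral_sub_mul_integral_le (h : HasConeDensity M Q S w) {a : ℝ} (hlam : 0 < lam)
    (hM : 0 ≤ M) (ha : a ∈ Ioo (0 : ℝ) 1) (haM : M / lam + Astar / lam ^ 2 ≤ a * M)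
    (Ts : ℕ → CM lam Astar) (N : ℕ) {G : Circle1 → ℝ} (hG : Continuous G) {Γ : ℝ}
    (hΓ : ∀ x, |G x| ≤ Γ) :
    |(∫ x : Circle1, w x * G (mapIter Ts N (S x))) -
        (∫ x : Circle1, w x) * ∫ x : Circle1, G (mapIter Ts N x)| ≤
      2 * Q * Γ * contractionFactor a M ^ N := by
  obtain ⟨z, φ₁, φ₂, h₁, h₂, hQ, hw⟩ := h
  have ha' := Ioo_subset_Icc_self ha
  have hΓ0 : 0 ≤ Γ := (abs_nonneg _).trans (hΓ 0)
  have hθ := contractionFactor_pos ha.1 ha.2.le hM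
  have hdecay₁ := h₁.abs_integral_sub_mul_integral_le hlam hM ha' haM Ts N hG hΓ
  have hdecay₂ := h₂.abs_integral_sub_mul_integral_le hlam hM ha' haM Ts N hG hΓ
  rw [integral_eq_sub hw, hw (fun x => G (mapIter Ts N x)) (hG.comp (continuous_mapIter Ts N)),
    sub_mul, sub_sub_sub_comm]
  refine (abs_sub _ _).trans ((add_le_add hdecay₁ hdecay₂).trans ?_)
  rw [← add_mul, ← add_mul, ← mul_add]
  gcongr

/-- Both integrals are compared with the Lebesgue mean of `G`. -/
lemma abs_integral_mapIter_sub_mul_le {a : ℝ} {Q' : ℝ} {w' : Circle1 → ℝ} {Ts : ℕ → CM lam Astar}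
    {s t : ℕ} (h : HasConeDensity M Q (mapIter Ts s) w)
    (h' : HasConeDensity M Q' (mapIter Ts s) w') (hw' : ∫ x : Circle1, w' x = 1) (hst : s ≤ t)
    (hlam : 0 < lam) (hM : 0 ≤ M) (ha : a ∈ Ioo (0 : ℝ) 1)
    (haM : M / lam + Astar / lam ^ 2 ≤ a * M) {G : Circle1 → ℝ} (hG : Continuous G) {Γ : ℝ}
    (hΓ : ∀ x, |G x| ≤ Γ) :
    |(∫ x : Circle1, w x * G (mapIter Ts t x)) -
        (∫ x : Circle1, w x) * ∫ x : Circle1, w' x * G (mapIter Ts t x)| ≤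
      2 * Q * (1 + Q') * Γ * contractionFactor a M ^ (t - s) := by
  obtain ⟨N, rfl⟩ := Nat.exists_eq_add_of_le hst
  have hdecay := h.abs_integral_sub_mul_integral_le hlam hM ha haM (fun i => Ts (s + i)) N hG hΓ
  have hdecay' := h'.abs_integral_sub_mul_integral_le hlam hM ha haM (fun i => Ts (s + i)) N hG hΓ
  simp only [← mapIter_add, hw', one_mul] at hdecay hdecay'
  rw [Nat.add_sub_cancel_left]
  set I := ∫ x : Circle1, w x
  set J := ∫ x : Circle1, G (mapIter (fun i => Ts (s + i)) N x)
  set A := ∫ x : Circle1, w x * G (mapIter Ts (s + N) x)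
  set A' := ∫ x : Circle1, w' x * G (mapIter Ts (s + N) x)
  have hmul : |I * (A' - J)| ≤ Q * (2 * Q' * Γ * contractionFactor a M ^ N) := by
    rw [abs_mul]
    exact mul_le_mul h.abs_integral_le hdecay' (abs_nonneg _)
      ((abs_nonneg _).trans h.abs_integral_le)
  calc |A - I * A'| = |(A - I * J) - I * (A' - J)| := by ring_nf
    _ ≤ |A - I * J| + |I * (A' - J)| := abs_sub _ _
    _ ≤ 2 * Q * (1 + Q') * Γ * contractionFactor a M ^ N := by linarith

end HasConeDensity

/-! ### Several observables -/

section MultipleCorrelations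

variable {lam Astar : ℝ}

lemma lipschitzWith_and_bound_of_lipNorm_le {f : Circle1 → ℝ} {K : NNReal}
    (hf : ∃ Kj : NNReal, LipschitzWith Kj f) (hK : lipNorm f ≤ K) :
    LipschitzWith K f ∧ ∀ x, |f x| ≤ K := by
  obtain ⟨Kj, hj⟩ := hf
  have hsup : ∀ x, |f x| ≤ supNorm f := le_ciSup (isCompact_range hj.continuous.abs).bddAbove
  have hne : {L : ℝ | 0 ≤ L ∧ ∀ x y : Circle1, |f x - f y| ≤ L * dist x y}.Nonempty :=
    ⟨Kj, Kj.coe_nonneg, hj.dist_le_mul⟩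
  have hlip0 : 0 ≤ lipConst f := le_csInf hne fun L hL => hL.1
  have hlip (x y : Circle1) : |f x - f y| ≤ lipConst f * dist x y := by
    rcases eq_or_ne x y with rfl | hxy
    · simp
    · rw [← div_le_iff₀ (dist_pos.2 hxy)]
      exact le_csInf hne fun L hL => (div_le_iff₀ (dist_pos.2 hxy)).2 (hL.2 x y)
  have hsum : lipConst f + supNorm f ≤ K := hK
  refine ⟨.of_dist_le_mul fun x y => (hlip x y).trans ?_, fun x => (hsup x).trans (by linarith)⟩
  have hsup0 : 0 ≤ supNorm f := (abs_nonneg _).trans (hsup 0)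
  gcongr
  linarith

lemma exists_forall_ge_div_add_le_mul (hlam : 1 < lam) (A : ℝ) :
    ∃ a ∈ Ioo (0 : ℝ) 1, ∃ M₀ > 0, ∀ M ≥ M₀, M / lam + A ≤ a * M := by
  have hlam0 : 0 < lam := zero_lt_one.trans hlam
  obtain ⟨a, hla, ha1⟩ := exists_between (inv_lt_one_of_one_lt₀ hlam)
  refine ⟨a, ⟨(inv_pos.2 hlam0).trans hla, ha1⟩, max 1 (A / (a - lam⁻¹)), by positivity,
    fun M hM => ?_⟩
  have hA := (div_le_iff₀ (sub_pos.2 hla)).1 ((le_max_right _ _).trans hM)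
  rw [div_eq_mul_inv]
  linarith

lemma HasConeDensity.prod_mul {M Q ε : ℝ} {K : NNReal} {w : Circle1 → ℝ}
    (hw : HasConeDensity M Q id w) (hlam : 0 < lam) (hM : 0 ≤ M) (hε : 0 < ε)
    (hinv : ∀ M' ≥ M, M' / lam + Astar / lam ^ 2 ≤ M') (Ts : ℕ → CM lam Astar)
    {f : ℕ → Circle1 → ℝ} {τ : ℕ → ℕ} (m : ℕ)
    (hf : ∀ j ∈ Icc 1 m, LipschitzWith K (f j) ∧ ∀ x, |f j x| ≤ K)
    (hτ : MonotoneOn τ (Icc 1 m)) {s : ℕ} (hs : ∀ j ∈ Icc 1 m, τ j ≤ s) :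
    HasConeDensity (M + m * ε) (Q * (K * (3 + 2 / ε)) ^ m) (mapIter Ts s)
      fun x => (∏ j ∈ Finset.Icc 1 m, f j (mapIter Ts (τ j) x)) * w x := by
  induction m generalizing s with
  | zero =>
    have hw' : HasConeDensity M Q (mapIter Ts s) w :=
      mapIter_of_le (a := 0) hw (Nat.zero_le s) hlam hM (hinv M le_rfl)
    simpa using hw'
  | succ m ih =>
    have hsub : Icc 1 m ⊆ Icc 1 (m + 1) := Icc_subset_Icc_right (Nat.le_succ m)
    have hlast : m + 1 ∈ Icc 1 (m + 1) := ⟨Nat.le_add_left 1 m, le_rfl⟩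
    have hM' : M ≤ M + m * ε + ε := by nlinarith [mul_nonneg m.cast_nonneg hε.le]
    have hprev := ih (fun j hj => hf j (hsub hj)) (hτ.mono hsub)
      fun j hj => hτ (hsub hj) hlast (hj.2.trans m.le_succ)
    have hnext := (hprev.mul_comp hε (hf _ hlast).2 (hf _ hlast).1).mapIter_of_le
      (hs _ hlast) hlam (hM.trans hM') (hinv _ hM')
    convert hnext using 1
    · push_cast
      ring
    · ring
    · ext x
      rw [Finset.prod_Icc_succ_top (Nat.le_add_left 1 m)]
      ring

lemma prod_mapIter_eq_prod_comp_mapIter (Ts : ℕ → CM lam Astar) (f : ℕ → Circle1 → ℝ)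
    {τ : ℕ → ℕ} {l k : ℕ} (hτ : ∀ j ∈ Finset.Icc l k, τ l ≤ τ j) (x : Circle1) :
    ∏ j ∈ Finset.Icc l k, f j (mapIter Ts (τ j) x) =
      ∏ j ∈ Finset.Icc l k,
        f j (mapIter (fun i => Ts (τ l + i)) (τ j - τ l) (mapIter Ts (τ l) x)) :=
  Finset.prod_congr rfl fun j hj => by rw [← mapIter_add, Nat.add_sub_cancel' (hτ j hj)]

lemma abs_prod_Icc_le_pow {ι : Type*} {g : ℕ → ι → ℝ} {K : ℝ} (hK : 1 ≤ K) {l k : ℕ} (hl : 1 ≤ l)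
    (hg : ∀ j ∈ Finset.Icc l k, ∀ y, |g j y| ≤ K) (y : ℕ → ι) :
    |∏ j ∈ Finset.Icc l k, g j (y j)| ≤ K ^ k := by
  rw [Finset.abs_prod]
  refine (Finset.prod_le_prod (fun _ _ => abs_nonneg _) fun j hj => hg j hj (y j)).trans ?_
  rw [Finset.prod_const, Nat.card_Icc]
  exact pow_le_pow_right₀ hK (by omega)

lemma prod_Icc_mul_prod_Icc {R : Type*} [CommMonoid R] (g : ℕ → R) {m k : ℕ} (hmk : m ≤ k) :
    (∏ j ∈ Finset.Icc 1 m, g j) * ∏ j ∈ Finset.Icc (m + 1) k, g j =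
      ∏ j ∈ Finset.Icc 1 k, g j := by
  simpa only [Finset.Ico_add_one_right_eq_Icc] using
    Finset.prod_Ico_consecutive g (Nat.le_add_left 1 m) (Nat.add_le_add_right hmk 1)

/-- The observables after the gap form one function `G` of the state at time `τ (m + 1)`. -/
lemma HasConeDensity.abs_integral_prod_sub_mul_le {a M Q Q' : ℝ} {K : NNReal} {k m : ℕ}
    {Ts : ℕ → CM lam Astar} {ρ : Circle1 → ℝ} {f : ℕ → Circle1 → ℝ} {τ : ℕ → ℕ}
    (h : HasConeDensity M Q (mapIter Ts (τ m))
      fun x => (∏ j ∈ Finset.Icc 1 m, f j (mapIter Ts (τ j) x)) * ρ x)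
    (h' : HasConeDensity M Q' (mapIter Ts (τ m)) ρ) (hρ : ∫ x : Circle1, ρ x = 1)
    (hlam : 0 < lam) (hM : 0 ≤ M) (ha : a ∈ Ioo (0 : ℝ) 1)
    (haM : M / lam + Astar / lam ^ 2 ≤ a * M) (hK : 1 ≤ K)
    (hf : ∀ j ∈ Icc 1 k, LipschitzWith K (f j) ∧ ∀ x, |f j x| ≤ K)
    (hτ : MonotoneOn τ (Icc 1 k)) (hm : m ∈ Ico 1 k) :
    |(∫ x : Circle1, (∏ j ∈ Finset.Icc 1 k, f j (mapIter Ts (τ j) x)) * ρ x) -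
        (∫ x : Circle1, (∏ j ∈ Finset.Icc 1 m, f j (mapIter Ts (τ j) x)) * ρ x) *
        ∫ x : Circle1, (∏ j ∈ Finset.Icc (m + 1) k, f j (mapIter Ts (τ j) x)) * ρ x| ≤
      2 * Q * (1 + Q') * K ^ k * contractionFactor a M ^ (τ (m + 1) - τ m) := by
  have hmem : ∀ j ∈ Finset.Icc (m + 1) k, j ∈ Icc 1 k := fun j hj =>
    ⟨(Nat.le_add_left 1 m).trans (Finset.mem_Icc.1 hj).1, (Finset.mem_Icc.1 hj).2⟩
  have hnext : m + 1 ∈ Icc 1 k := ⟨Nat.le_add_left 1 m, hm.2⟩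
  set G : Circle1 → ℝ := fun y => ∏ j ∈ Finset.Icc (m + 1) k,
    f j (mapIter (fun i => Ts (τ (m + 1) + i)) (τ j - τ (m + 1)) y)
  have hG : Continuous G := continuous_finsetProd _ fun j hj =>
    (hf j (hmem j hj)).1.continuous.comp (continuous_mapIter _ _)
  have hGbound (y : Circle1) : |G y| ≤ (K : ℝ) ^ k :=
    abs_prod_Icc_le_pow hK (Nat.le_add_left 1 m) (fun j hj => (hf j (hmem j hj)).2) _
  have hGprod (x : Circle1) : ∏ j ∈ Finset.Icc (m + 1) k, f j (mapIter Ts (τ j) x) =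
      G (mapIter Ts (τ (m + 1)) x) := prod_mapIter_eq_prod_comp_mapIter Ts f
    (fun j hj => hτ hnext (hmem j hj) (Finset.mem_Icc.1 hj).1) x
  have hbound := h.abs_integral_mapIter_sub_mul_le h' hρ
    (hτ ⟨hm.1, hm.2.le⟩ hnext m.le_succ) hlam hM ha haM hG hGbound
  convert hbound using 3
  · congr 1 with x
    rw [← hGprod, ← prod_Icc_mul_prod_Icc _ hm.2.le, mul_right_comm]
  · simp only [hGprod, mul_comm (G _)]

theorem exists_decorrelation_bound (hlam : 1 < lam) (Astar : ℝ) :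
    ∃ θ ∈ Ioo (0 : ℝ) 1, ∀ (k : ℕ) (L : ℝ) (K : NNReal), 0 ≤ L → 1 ≤ K → ∃ C > 0,
      ∀ (Ts : ℕ → CM lam Astar) (ρ : Circle1 → ℝ) (z : Circle1), ∫ x : Circle1, ρ x = 1 →
        LipOnArc z L ρ → ∀ f : ℕ → Circle1 → ℝ,
          (∀ j ∈ Icc 1 k, LipschitzWith K (f j) ∧ ∀ x, |f j x| ≤ K) →
        ∀ τ : ℕ → ℕ, MonotoneOn τ (Icc 1 k) → ∀ m ∈ Ico 1 k,
          |(∫ x : Circle1, (∏ j ∈ Finset.Icc 1 k, f j (mapIter Ts (τ j) x)) * ρ x) -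
            (∫ x : Circle1, (∏ j ∈ Finset.Icc 1 m, f j (mapIter Ts (τ j) x)) * ρ x) *
            ∫ x : Circle1, (∏ j ∈ Finset.Icc (m + 1) k, f j (mapIter Ts (τ j) x)) * ρ x| ≤
          C * θ ^ (τ (m + 1) - τ m) := by
  have hlam0 : 0 < lam := zero_lt_one.trans hlam
  obtain ⟨a, ha, M₀, hM₀, haM⟩ := exists_forall_ge_div_add_le_mul hlam (Astar / lam ^ 2)
  have hinv : ∀ M ≥ M₀, M / lam + Astar / lam ^ 2 ≤ M := fun M hM =>
    (haM M hM).trans (mul_le_of_le_one_left (hM₀.lt.le.trans hM) ha.2.le)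
  set M := M₀ + 1 with hM
  have hM0 : 0 < M := by positivity
  refine ⟨contractionFactor a M, ⟨contractionFactor_pos ha.1 ha.2.le hM0.le,
    contractionFactor_lt_one ha.2⟩, fun k L K hL hK => ?_⟩
  set ε : ℝ := (k + 1 : ℝ)⁻¹ with hε
  have hε0 : 0 < ε := by positivity
  set B : ℝ := K * (3 + 2 / ε)
  have hB : 1 ≤ B := one_le_mul_of_one_le_of_one_le hK (by
    have : 0 ≤ 2 / ε := by positivity
    linarith)
  set Q := (1 + L) * (3 + 2 / M₀) * B ^ k
  set Q' := (1 + L) * (3 + 2 / M)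
  refine ⟨2 * Q * (1 + Q') * K ^ k, by positivity, fun Ts ρ z hρ hlip f hf τ hτ m hm => ?_⟩
  have hmk : m ≤ k := hm.2.le
  have hsub : Icc 1 m ⊆ Icc 1 k := Icc_subset_Icc_right hmk
  have hρ' : HasConeDensity M Q' (mapIter Ts (τ m)) ρ :=
    (HasConeDensity.of_lipOnArc hρ hL hlip hM0).mapIter_of_le (a := 0) (Nat.zero_le _) hlam0 hM0.le
      (hinv M (by simp [hM]))
  have hprod := (HasConeDensity.of_lipOnArc hρ hL hlip hM₀).prod_mul hlam0 hM₀.lt.le hε0 hinv Ts m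
    (fun j hj => hf j (hsub hj)) (hτ.mono hsub) fun j hj => hτ (hsub hj) ⟨hm.1, hmk⟩ hj.2
  have hmε : m * ε ≤ 1 := by
    rw [hε, mul_inv_le_iff₀ (by positivity), one_mul]
    exact_mod_cast hmk.trans k.le_succ
  exact (hprod.mono (add_le_add_right hmε M₀) (mul_le_mul_of_nonneg_left
    (pow_le_pow_right₀ hB hmk) (by positivity))).abs_integral_prod_sub_mul_le
    hρ' hρ hlam0 hM0.le ha (haM M (by simp [hM])) hK hf hτ hm

lemma pow_floor_sub_floor_le {θ : ℝ} (hθ : θ ∈ Ioo (0 : ℝ) 1) {x y : ℝ} (hx : 0 ≤ x) :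
    θ ^ (⌊y⌋₊ - ⌊x⌋₊) ≤ θ⁻¹ * θ ^ (y - x) := by
  have hgap : y - x - 1 ≤ (⌊y⌋₊ - ⌊x⌋₊ : ℕ) := by
    have hcast : (⌊y⌋₊ : ℝ) ≤ (⌊y⌋₊ - ⌊x⌋₊ : ℕ) + ⌊x⌋₊ := by exact_mod_cast le_tsub_add
    linarith [Nat.lt_floor_add_one y, Nat.floor_le hx]
  calc θ ^ (⌊y⌋₊ - ⌊x⌋₊) = θ ^ ((⌊y⌋₊ - ⌊x⌋₊ : ℕ) : ℝ) := (Real.rpow_natCast _ _).symm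
    _ ≤ θ ^ (y - x - 1) := Real.rpow_le_rpow_of_exponent_ge hθ.1 hθ.2.le hgap
    _ = θ⁻¹ * θ ^ (y - x) := by rw [Real.rpow_sub_one hθ.1.ne', div_eq_inv_mul]

theorem statement9_general (hlam : 1 < lam) (Astar : ℝ) :
    ∃ θ ∈ Ioo (0 : ℝ) 1, ∀ (k : ℕ) (L K : ℝ), 0 ≤ L → ∃ C > 0,
      ∀ (Tarr : ℕ → ℕ → CM lam Astar) (ρ : Circle1 → ℝ) (z : Circle1),
        ∫ x : Circle1, ρ x = 1 → LipOnArc z L ρ → ∀ f : ℕ → Circle1 → ℝ,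
          (∀ j ∈ Icc 1 k, (∃ Kj : NNReal, LipschitzWith Kj (f j)) ∧ lipNorm (f j) ≤ K) →
        ∀ t : ℕ → ℝ, (∀ j ∈ Icc 1 k, 0 ≤ t j) → MonotoneOn t (Icc 1 k) →
          ∀ m ∈ Ico 1 k, ∀ n : ℕ,
            |(∫ x : Circle1,
                (∏ j ∈ Finset.Icc 1 k, f j (arrIter Tarr n ⌊(n : ℝ) * t j⌋₊ x)) * ρ x) -
              (∫ x : Circle1,
                (∏ j ∈ Finset.Icc 1 m, f j (arrIter Tarr n ⌊(n : ℝ) * t j⌋₊ x)) * ρ x) *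
              ∫ x : Circle1,
                (∏ j ∈ Finset.Icc (m + 1) k, f j (arrIter Tarr n ⌊(n : ℝ) * t j⌋₊ x)) * ρ x| ≤
            C * θ ^ ((n : ℝ) * (t (m + 1) - t m)) := by
  obtain ⟨θ, hθ, hbound⟩ := exists_decorrelation_bound hlam Astar
  refine ⟨θ, hθ, fun k L K hL => ?_⟩
  obtain ⟨C, hC, hdecay⟩ := hbound k L (max K.toNNReal 1) hL (le_max_right _ _)
  have hK : K ≤ (max K.toNNReal 1 : NNReal) :=
    K.le_coe_toNNReal.trans (NNReal.coe_le_coe.2 (le_max_left _ _))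
  refine ⟨C * θ⁻¹, mul_pos hC (inv_pos.2 hθ.1), fun Tarr ρ z hρ hlip f hf t ht htm m hm n => ?_⟩
  have hτ : MonotoneOn (fun j => ⌊(n : ℝ) * t j⌋₊) (Icc 1 k) := fun i hi j hj hij =>
    Nat.floor_mono (mul_le_mul_of_nonneg_left (htm hi hj hij) n.cast_nonneg)
  simp only [arrIter_eq_mapIter]
  refine (hdecay (Tarr n) ρ z hρ hlip f (fun j hj =>
    lipschitzWith_and_bound_of_lipNorm_le (hf j hj).1 ((hf j hj).2.trans hK)) _ hτ m hm).trans ?_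
  rw [mul_assoc, mul_sub]
  exact mul_le_mul_of_nonneg_left
    (pow_floor_sub_floor_le hθ (mul_nonneg n.cast_nonneg (ht m ⟨hm.1, hm.2.le⟩))) hC.lt.le

end MultipleCorrelations

/-- Lemma `lem:dec`.  Exponential decorrelation of multiple observables:
there is `ϑ ∈ (0,1)` such that for `μ` with density Lipschitz on `J_z` with constant `L`,
Lipschitz observables `f⁽¹⁾, …, f⁽ᵏ⁾` with Lipschitz norms bounded by `K`, and times
`0 ≤ t₁ < ⋯ < t_k ≤ 1`,
`|μ(f⁽¹⁾_{n,⌊nt₁⌋}⋯f⁽ᵏ⁾_{n,⌊nt_k⌋}) − μ(f⁽¹⁾⋯f⁽ᵐ⁾)·μ(f⁽ᵐ⁺¹⁾⋯f⁽ᵏ⁾)| ≤ Cϑ^{n(t_{m+1}−t_m)}`,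
where `C` depends only on `k`, the Lipschitz norms, and `L`. -/
theorem statement9 {lam Astar : ℝ} (hlam : 1 < lam) (hA : 0 < Astar)
    (Tarr : ℕ → ℕ → CM lam Astar) :
    ∃ θ : ℝ, θ ∈ Set.Ioo (0 : ℝ) 1 ∧
      ∀ k : ℕ, 2 ≤ k → ∀ L K : ℝ, 0 < L → 0 ≤ K → ∃ C : ℝ, 0 < C ∧
        ∀ (ρ : Circle1 → ℝ) (z : Circle1), IsProbDensity ρ → LipOnArc z L ρ →
          ∀ f : ℕ → Circle1 → ℝ,
            (∀ j, (∃ Kj : NNReal, LipschitzWith Kj (f j)) ∧ lipNorm (f j) ≤ K) →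
          ∀ t : ℕ → ℝ, (∀ j ∈ Finset.Icc 1 k, t j ∈ Set.Icc (0 : ℝ) 1) →
            (∀ i j : ℕ, 1 ≤ i → i < j → j ≤ k → t i < t j) →
          ∀ m : ℕ, 1 ≤ m → m ≤ k - 1 → ∀ n : ℕ,
            |(∫ x : Circle1,
                (∏ j ∈ Finset.Icc 1 k, f j (arrIter Tarr n ⌊(n : ℝ) * t j⌋₊ x)) * ρ x) -
              (∫ x : Circle1,
                (∏ j ∈ Finset.Icc 1 m, f j (arrIter Tarr n ⌊(n : ℝ) * t j⌋₊ x)) * ρ x) *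
              (∫ x : Circle1,
                (∏ j ∈ Finset.Icc (m+1) k, f j (arrIter Tarr n ⌊(n : ℝ) * t j⌋₊ x)) * ρ x)| ≤
              C * θ ^ ((n : ℝ) * (t (m+1) - t m)) := by
  obtain ⟨θ, hθ, hbound⟩ := statement9_general hlam Astar
  refine ⟨θ, hθ, fun k _ L K hL _ => (hbound k L K hL.le).imp fun C ⟨hC, h⟩ => ⟨hC, ?_⟩⟩
  exact fun ρ z hρ hlip f hf t ht htm m hm hmk n =>
    h Tarr ρ z hρ.2.1 hlip f (fun j _ => hf j) t (fun j hj => (ht j (Finset.mem_Icc.2 hj)).1)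
      (StrictMonoOn.monotoneOn fun i hi j hj hij => htm i j hi.1 hij hj.2) m ⟨hm, by omega⟩ n
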